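/- Let μ be any satisfaction function (not necessarily DNS) and let I be a PB instance with budget b and maximum project cost c_max. Then the outcome P_G of Greedy_μ satisfies uw_μ(P_G) ≥ ((b − c_max)/b) · uw_μ(P*) for every feasible outcome P* ⊆ P; i.e., Greedy_μ has utilitarian guarantee (b − c_max)/b with respect to μ. -/

import Mathlib

open Finset
open scoped Classical

noncomputable section

/-- A participatory budgeting (PB) instance. -/
structure PB (π ν : Type) where
  projs : Finset π
  voters : Finset ν
  approves : ν → Finset π
  cost : π → ℝ
  budget : ℝ
  projs_nonempty : projs.Nonempty
  budget_pos : 0 < budget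
  cost_pos : ∀ p ∈ projs, 0 < cost p
  cost_le_budget : ∀ p ∈ projs, cost p ≤ budget
  approves_subset : ∀ i ∈ voters, approves i ⊆ projs

/-- A satisfaction function assigns a positive value to each positive cost. -/
def IsSat (μ : ℝ → ℝ) : Prop := ∀ t : ℝ, 0 < t → 0 < μ t

/-- A DNS function: weakly increasing, with weakly decreasing satisfaction per unit cost. -/
def IsDNS (μ : ℝ → ℝ) : Prop :=
  IsSat μ ∧ (∀ s t : ℝ, 0 < s → s ≤ t → μ s ≤ μ t) ∧
    (∀ s t : ℝ, 0 < s → s ≤ t → μ t / t ≤ μ s / s)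

namespace PB

variable {π ν : Type}

/-- Supporters of a project. -/
def supp (I : PB π ν) (p : π) : Finset ν := I.voters.filter (fun i => p ∈ I.approves i)

/-- Total cost of a set of projects. -/
def costOf (I : PB π ν) (S : Finset π) : ℝ := ∑ p ∈ S, I.cost p

/-- A feasible outcome. -/
def feasibleSet (I : PB π ν) (S : Finset π) : Prop := S ⊆ I.projs ∧ I.costOf S ≤ I.budget

/-- Minimum project cost. -/
def cmin (I : PB π ν) : ℝ := I.projs.inf' I.projs_nonempty I.cost

/-- Maximum project cost. -/
def cmax (I : PB π ν) : ℝ := I.projs.sup' I.projs_nonempty I.cost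

/-- Utilitarian welfare of a set of projects. -/
def uw (I : PB π ν) (μ : ℝ → ℝ) (S : Finset π) : ℝ :=
  ∑ p ∈ S, ((I.supp p).card : ℝ) * μ (I.cost p)

/-- The value ("bang per buck") of a project. -/
def projVal (I : PB π ν) (μ : ℝ → ℝ) (p : π) : ℝ :=
  ((I.supp p).card : ℝ) * μ (I.cost p) / I.cost p

/-- Satisfaction of voter `i` from an outcome. -/
def satOf (I : PB π ν) (μ : ℝ → ℝ) (i : ν) (S : Finset π) : ℝ :=
  ∑ p ∈ S ∩ I.approves i, μ (I.cost p)

/-- Minimum satisfaction of a project in the instance. -/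
def muMin (I : PB π ν) (μ : ℝ → ℝ) : ℝ :=
  I.projs.inf' I.projs_nonempty (fun p => μ (I.cost p))

/-- Maximum satisfaction of a project in the instance. -/
def muMax (I : PB π ν) (μ : ℝ → ℝ) : ℝ :=
  I.projs.sup' I.projs_nonempty (fun p => μ (I.cost p))

/-- The maximal utilitarian welfare over feasible outcomes. -/
def maxUW (I : PB π ν) (μ : ℝ → ℝ) : ℝ :=
  (I.projs.powerset.filter (fun S => I.costOf S ≤ I.budget)).sup'
    ⟨∅, Finset.mem_filter.mpr ⟨Finset.empty_mem_powerset _,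
      by simpa [PB.costOf] using I.budget_pos.le⟩⟩
    (I.uw μ)

/-- A group `N'` is `T`-cohesive. -/
def cohesive (I : PB π ν) (N' : Finset ν) (T : Finset π) : Prop :=
  N' ⊆ I.voters ∧ T ⊆ I.projs ∧ (∀ i ∈ N', T ⊆ I.approves i) ∧
    I.costOf T ≤ ((N'.card : ℝ) / (I.voters.card : ℝ)) * I.budget

/-- Extended justified representation up to one project w.r.t. `μ`. -/
def EJR1 (I : PB π ν) (μ : ℝ → ℝ) (W : Finset π) : Prop :=
  ∀ N' T, I.cohesive N' T →
    T ⊆ W ∨ ∃ i ∈ N', ∃ p ∈ I.approves i, p ∉ W ∧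
      I.satOf μ i W + μ (I.cost p) > I.satOf μ i T

/-- Pick the element of maximal `f`-value, breaking ties by the linear order. -/
def pickMax [LinearOrder π] (f : π → ℝ) (S : Finset π) (h : S.Nonempty) : π :=
  (S.filter (fun p => ∀ q ∈ S, f q ≤ f p)).min' (by
    obtain ⟨p, hp, hm⟩ := S.exists_max_image f h
    exact ⟨p, Finset.mem_filter.mpr ⟨hp, hm⟩⟩)

/-- Pick the element of minimal `f`-value, breaking ties by the linear order. -/
def pickMin [LinearOrder π] (f : π → ℝ) (S : Finset π) (h : S.Nonempty) : π :=
  (S.filter (fun p => ∀ q ∈ S, f p ≤ f q)).min' (by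
    obtain ⟨p, hp, hm⟩ := S.exists_min_image f h
    exact ⟨p, Finset.mem_filter.mpr ⟨hp, hm⟩⟩)

section Greedy

variable [LinearOrder π]

/-- One choice of the greedy rule: among the unchosen affordable projects, the one of
maximum value (ties broken by the linear order); `none` if no project is affordable. -/
def greedyStep (I : PB π ν) (μ : ℝ → ℝ) (rem : Finset π) (budg : ℝ) : Option π :=
  if h : (rem.filter (fun p => I.cost p ≤ budg)).Nonempty then
    some (pickMax (I.projVal μ) (rem.filter (fun p => I.cost p ≤ budg)) h)
  else none

/-- The (ordered) list of projects chosen by the greedy rule, with fuel. -/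
def greedyAux (I : PB π ν) (μ : ℝ → ℝ) : ℕ → Finset π → ℝ → List π
  | 0, _, _ => []
  | (k+1), rem, budg =>
    match I.greedyStep μ rem budg with
    | none => []
    | some p => p :: greedyAux I μ k (rem.erase p) (budg - I.cost p)

/-- The projects chosen by `Greedy_μ`, in order of selection. -/
def greedySeq (I : PB π ν) (μ : ℝ → ℝ) : List π :=
  greedyAux I μ I.projs.card I.projs I.budget

/-- The outcome of the greedy rule started from a set `rem` of unchosen projects
with remaining budget `budg`. -/
def greedyFrom (I : PB π ν) (μ : ℝ → ℝ) (rem : Finset π) (budg : ℝ) : Finset π :=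
  (greedyAux I μ rem.card rem budg).toFinset

/-- The outcome of `Greedy_μ`. -/
def greedy (I : PB π ν) (μ : ℝ → ℝ) : Finset π := (I.greedySeq μ).toFinset

/-- The state (unchosen projects, remaining budget) of `Greedy_μ` after `k` stages. -/
def greedyStateAux (I : PB π ν) (μ : ℝ → ℝ) : ℕ → Finset π × ℝ
  | 0 => (I.projs, I.budget)
  | (k+1) =>
    match I.greedyStep μ (greedyStateAux I μ k).1 (greedyStateAux I μ k).2 with
    | none => greedyStateAux I μ k
    | some p => ((greedyStateAux I μ k).1.erase p, (greedyStateAux I μ k).2 - I.cost p)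

/-- The project chosen by `Greedy_μ` at stage `k+1` (i.e. after `k` stages), if any. -/
def greedyChoice (I : PB π ν) (μ : ℝ → ℝ) (k : ℕ) : Option π :=
  I.greedyStep μ (I.greedyStateAux μ k).1 (I.greedyStateAux μ k).2

end Greedy

section MES

variable [LinearOrder π]

/-- The set of values `ρ ≥ 0` at which project `p` can be bought given voter budgets `bud`. -/
def rhoSet (I : PB π ν) (μ : ℝ → ℝ) (bud : ν → ℝ) (p : π) : Set ℝ :=
  {ρ : ℝ | 0 ≤ ρ ∧ ∑ i ∈ I.supp p, min (bud i) (ρ * μ (I.cost p)) = I.cost p}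

/-- `ρ(p)`: the least `ρ ≥ 0` at which `p` can be bought (junk value if none exists). -/
def rho (I : PB π ν) (μ : ℝ → ℝ) (bud : ν → ℝ) (p : π) : ℝ := sInf (I.rhoSet μ bud p)

/-- One choice of MES: among the unchosen projects with `ρ(p) < ∞`, one minimizing `ρ(p)`
(ties broken by the linear order); `none` if no project can be bought. -/
def mesStep (I : PB π ν) (μ : ℝ → ℝ) (rem : Finset π) (bud : ν → ℝ) : Option π :=
  if h : (rem.filter (fun p => (I.rhoSet μ bud p).Nonempty)).Nonempty then
    some (pickMin (I.rho μ bud) (rem.filter (fun p => (I.rhoSet μ bud p).Nonempty)) h)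
  else none

/-- Voter budgets after the supporters of `p` pay for it. -/
def mesPay (I : PB π ν) (μ : ℝ → ℝ) (bud : ν → ℝ) (p : π) : ν → ℝ :=
  fun i => if i ∈ I.supp p then bud i - min (bud i) (I.rho μ bud p * μ (I.cost p)) else bud i

/-- The state (unchosen projects, voter budgets) of `MES_μ` after `k` stages. -/
def mesStateAux (I : PB π ν) (μ : ℝ → ℝ) : ℕ → Finset π × (ν → ℝ)
  | 0 => (I.projs, fun _ => I.budget / (I.voters.card : ℝ))
  | (k+1) =>
    match I.mesStep μ (mesStateAux I μ k).1 (mesStateAux I μ k).2 with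
    | none => mesStateAux I μ k
    | some p => ((mesStateAux I μ k).1.erase p, I.mesPay μ (mesStateAux I μ k).2 p)

/-- The project chosen by `MES_μ` at stage `k+1` (i.e. after `k` stages), if any. -/
def mesChoice (I : PB π ν) (μ : ℝ → ℝ) (k : ℕ) : Option π :=
  I.mesStep μ (I.mesStateAux μ k).1 (I.mesStateAux μ k).2

/-- The final state of `MES_μ`. -/
def mesFinal (I : PB π ν) (μ : ℝ → ℝ) : Finset π × (ν → ℝ) :=
  I.mesStateAux μ I.projs.card

/-- The outcome of `MES_μ`. -/
def mesOutcome (I : PB π ν) (μ : ℝ → ℝ) : Finset π := I.projs \ (I.mesFinal μ).1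

/-- The outcome of `MES_μ` completed by `Greedy_μ`: run MES, then greedy on the unchosen
projects with the remaining total budget. -/
def completedMES (I : PB π ν) (μ : ℝ → ℝ) : Finset π :=
  I.mesOutcome μ ∪
    I.greedyFrom μ (I.mesFinal μ).1 (I.budget - I.costOf (I.mesOutcome μ))

/-- Voter `i` is budget-limited for project `p` after `k` stages of `MES_μ`:
`p` is unchosen and approved by `i`, affordable from the total remaining budget,
but an equal split of its cost exceeds `i`'s personal budget. -/
def budgetLimitedAt (I : PB π ν) (μ : ℝ → ℝ) (k : ℕ) (i : ν) (p : π) : Prop :=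
  i ∈ I.voters ∧ p ∈ (I.mesStateAux μ k).1 ∧ p ∈ I.approves i ∧
    I.cost p ≤ ∑ j ∈ I.voters, (I.mesStateAux μ k).2 j ∧
    (I.mesStateAux μ k).2 i < I.cost p / ((I.supp p).card : ℝ)

end MES

/-- Total cost of a list of projects. -/
def listCost (I : PB π ν) (L : List π) : ℝ := (L.map I.cost).sum

/-- Total utilitarian welfare of a list of projects. -/
def listUW (I : PB π ν) (μ : ℝ → ℝ) (L : List π) : ℝ :=
  (L.map (fun p => ((I.supp p).card : ℝ) * μ (I.cost p))).sum

end PB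

/-!
Track the greedy rule from an arbitrary state: a set `rem` of unchosen projects, all of cost at
most `M`, and a remaining budget `β`. By induction on `rem`, the projects `G` it still buys satisfy
`(β - M) * uw T ≤ t * uw G` for every `T ⊆ rem` of cost at most `t`, where `β - M ≤ t`.
If `β ≤ M`, the left-hand side is not positive. Otherwise everything in `rem` is affordable, so the
project `a` bought next has maximum value in `rem` and `uw T` is at most the value of `a` times
`t`. Buying `a` lowers `β` by the cost of `a`; it also removes `a` from `T` and lowers `t` by the
same amount when `a ∈ T`. In both cases the bound on `uw T` makes up for the change.
The theorem is the initial state, with `M = cmax` and `β = t = budget`.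
-/

theorem mul_add_le_mul_add_of_sub_mul_le_sub_mul {R : Type*} [CommRing R] [LinearOrder R]
    [IsStrictOrderedRing R] {c d g t v x : R} (hc : 0 ≤ c) (hct : c ≤ t) (hdt : d ≤ t)
    (hg : 0 ≤ g) (hv : 0 ≤ v) (hx : 0 ≤ x) (hxv : x ≤ v * (t - c))
    (h : (d - c) * x ≤ (t - c) * g) : d * (v * c + x) ≤ t * (v * c + g) := by
  rcases hct.eq_or_lt with rfl | hlt
  · have hx0 : x = 0 := le_antisymm (by simpa only [sub_self, mul_zero] using hxv) hx
    rw [hx0, add_zero]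
    exact mul_le_mul hdt (le_add_of_nonneg_right hg) (mul_nonneg hv hc) hc
  · have hslack : 0 ≤ c * (t - d) * (v * (t - c) - x) :=
      mul_nonneg (mul_nonneg hc (sub_nonneg.2 hdt)) (sub_nonneg.2 hxv)
    refine le_of_mul_le_mul_left ?_ (sub_pos.2 hlt)
    calc (t - c) * (d * (v * c + x))
        = (t - c) * t * (v * c) + t * ((d - c) * x) - c * (t - d) * (v * (t - c) - x) := by ring
      _ ≤ (t - c) * t * (v * c) + t * ((d - c) * x) := sub_le_self _ hslack
      _ ≤ (t - c) * t * (v * c) + t * ((t - c) * g) := by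
        gcongr
        exact hc.trans hct
      _ = (t - c) * (t * (v * c + g)) := by ring

namespace PB

variable {π ν : Type} {I : PB π ν} {μ : ℝ → ℝ} {S : Finset π} {p : π}

theorem cost_le_cmax (hp : p ∈ I.projs) : I.cost p ≤ I.cmax :=
  le_sup' I.cost hp

theorem cmax_pos (I : PB π ν) : 0 < I.cmax :=
  let ⟨_, hp⟩ := I.projs_nonempty
  (I.cost_pos _ hp).trans_le (cost_le_cmax hp)

theorem costOf_nonneg (hS : S ⊆ I.projs) : 0 ≤ I.costOf S :=
  sum_nonneg fun p hp ↦ (I.cost_pos p (hS hp)).le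

theorem costOf_erase_le_sub [DecidableEq π] {t : ℝ} (hp : p ∈ S) (hcost : I.costOf S ≤ t) :
    I.costOf (S.erase p) ≤ t - I.cost p :=
  (sum_erase_eq_sub hp).trans_le (sub_le_sub_right hcost _)

theorem projVal_nonneg (hμ : IsSat μ) (hp : p ∈ I.projs) : 0 ≤ I.projVal μ p :=
  have hcost := I.cost_pos p hp
  div_nonneg (mul_nonneg (Nat.cast_nonneg _) (hμ _ hcost).le) hcost.le

theorem uw_eq_sum_projVal_mul_cost (hS : S ⊆ I.projs) :
    I.uw μ S = ∑ p ∈ S, I.projVal μ p * I.cost p :=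
  sum_congr rfl fun p hp ↦ (div_mul_cancel₀ _ (I.cost_pos p (hS hp)).ne').symm

theorem uw_nonneg (hμ : IsSat μ) (hS : S ⊆ I.projs) : 0 ≤ I.uw μ S :=
  sum_nonneg fun p hp ↦ mul_nonneg (Nat.cast_nonneg _) (hμ _ (I.cost_pos p (hS hp))).le

theorem uw_insert [DecidableEq π] (hp : p ∈ I.projs) (hpS : p ∉ S) :
    I.uw μ (insert p S) = I.projVal μ p * I.cost p + I.uw μ S := by
  rw [uw, sum_insert hpS, projVal, div_mul_cancel₀ _ (I.cost_pos p hp).ne', uw]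

theorem uw_le_mul_of_projVal_le {v t : ℝ} (hv : 0 ≤ v) (hS : S ⊆ I.projs)
    (hval : ∀ p ∈ S, I.projVal μ p ≤ v) (hcost : I.costOf S ≤ t) : I.uw μ S ≤ v * t :=
  calc I.uw μ S = ∑ p ∈ S, I.projVal μ p * I.cost p := uw_eq_sum_projVal_mul_cost hS
    _ ≤ ∑ p ∈ S, v * I.cost p :=
      sum_le_sum fun p hp ↦ mul_le_mul_of_nonneg_right (hval p hp) (I.cost_pos p (hS hp)).le
    _ = v * I.costOf S := (mul_sum ..).symm
    _ ≤ v * t := mul_le_mul_of_nonneg_left hcost hv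

theorem mul_uw_le_mul_add_of_projVal_le {d g t : ℝ} (hμ : IsSat μ) (hS : S ⊆ I.projs)
    (hp : p ∈ I.projs) (hmax : ∀ q ∈ S, I.projVal μ q ≤ I.projVal μ p) (hcost : I.costOf S ≤ t)
    (h : (d - I.cost p) * I.uw μ S ≤ t * g) :
    d * I.uw μ S ≤ t * (I.projVal μ p * I.cost p + g) :=
  have hcost_nonneg : 0 ≤ I.cost p := (I.cost_pos p hp).le
  calc d * I.uw μ S
      = (d - I.cost p) * I.uw μ S + I.cost p * I.uw μ S := by ring
    _ ≤ t * g + I.cost p * (I.projVal μ p * t) := by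
      gcongr
      exact uw_le_mul_of_projVal_le (projVal_nonneg hμ hp) hS hmax hcost
    _ = t * (I.projVal μ p * I.cost p + g) := by ring

theorem mul_uw_le_mul_add_of_mem [DecidableEq π] {d g t : ℝ} (hμ : IsSat μ) (hS : S ⊆ I.projs)
    (hp : p ∈ S) (hmax : ∀ q ∈ S, I.projVal μ q ≤ I.projVal μ p) (hcost : I.costOf S ≤ t)
    (hdt : d ≤ t) (hg : 0 ≤ g)
    (h : (d - I.cost p) * I.uw μ (S.erase p) ≤ (t - I.cost p) * g) :
    d * I.uw μ S ≤ t * (I.projVal μ p * I.cost p + g) := by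
  have hv : 0 ≤ I.projVal μ p := projVal_nonneg hμ (hS hp)
  have hS' : S.erase p ⊆ I.projs := (erase_subset p S).trans hS
  have hcost' : I.costOf (S.erase p) ≤ t - I.cost p := costOf_erase_le_sub hp hcost
  have hpt : I.cost p ≤ t := sub_nonneg.1 ((costOf_nonneg hS').trans hcost')
  have huw : I.uw μ (S.erase p) ≤ I.projVal μ p * (t - I.cost p) :=
    uw_le_mul_of_projVal_le hv hS' (fun q hq ↦ hmax q (mem_of_mem_erase hq)) hcost'
  rw [← insert_erase hp, uw_insert (hS hp) (notMem_erase p S)]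
  exact mul_add_le_mul_add_of_sub_mul_le_sub_mul (I.cost_pos p (hS hp)).le hpt hdt hg hv
    (uw_nonneg hμ hS') huw h

variable [LinearOrder π] {rem T : Finset π} {β M t : ℝ} {a : π}

theorem pickMax_mem_filter (f : π → ℝ) (hS : S.Nonempty) :
    pickMax f S hS ∈ S.filter fun p ↦ ∀ q ∈ S, f q ≤ f p :=
  min'_mem _ _

theorem lt_cost_of_greedyStep_eq_none (h : I.greedyStep μ rem β = none) (hp : p ∈ rem) :
    β < I.cost p := by
  by_contra! hcost
  have hne : (rem.filter fun q ↦ I.cost q ≤ β).Nonempty := ⟨p, mem_filter.2 ⟨hp, hcost⟩⟩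
  simp [greedyStep, hne] at h

theorem mem_and_projVal_le_of_greedyStep_eq_some (h : I.greedyStep μ rem β = some a) :
    a ∈ rem ∧ ∀ p ∈ rem, I.cost p ≤ β → I.projVal μ p ≤ I.projVal μ a := by
  rw [greedyStep] at h
  split_ifs at h with hne
  obtain rfl := Option.some.inj h
  obtain ⟨hmem, hmax⟩ := mem_filter.1 (pickMax_mem_filter (I.projVal μ) hne)
  exact ⟨mem_of_mem_filter _ hmem, fun p hp hcost ↦ hmax p (mem_filter.2 ⟨hp, hcost⟩)⟩

theorem mem_of_greedyStep_eq_some (h : I.greedyStep μ rem β = some a) : a ∈ rem :=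
  (mem_and_projVal_le_of_greedyStep_eq_some h).1

theorem projVal_le_of_greedyStep_eq_some (h : I.greedyStep μ rem β = some a) (hp : p ∈ rem)
    (hcost : I.cost p ≤ β) : I.projVal μ p ≤ I.projVal μ a :=
  (mem_and_projVal_le_of_greedyStep_eq_some h).2 p hp hcost

theorem greedyFrom_of_greedyStep_eq_none (h : I.greedyStep μ rem β = none) :
    I.greedyFrom μ rem β = ∅ := by
  rw [greedyFrom]
  cases rem.card <;> simp [greedyAux, h]

theorem greedyFrom_of_greedyStep_eq_some (h : I.greedyStep μ rem β = some a) :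
    I.greedyFrom μ rem β = insert a (I.greedyFrom μ (rem.erase a) (β - I.cost a)) := by
  rw [greedyFrom, ← card_erase_add_one (mem_of_greedyStep_eq_some h)]
  simp [greedyAux, h, greedyFrom]

theorem greedyFrom_subset (I : PB π ν) (μ : ℝ → ℝ) (rem : Finset π) (β : ℝ) :
    I.greedyFrom μ rem β ⊆ rem := by
  induction rem using Finset.strongInduction generalizing β with
  | H rem ih =>
    cases h : I.greedyStep μ rem β with
    | none => simp [greedyFrom_of_greedyStep_eq_none h]
    | some a =>
      have ha := mem_of_greedyStep_eq_some h
      rw [greedyFrom_of_greedyStep_eq_some h]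
      exact insert_subset ha ((ih _ (erase_ssubset ha) _).trans (erase_subset a rem))

theorem uw_greedyFrom_of_greedyStep_eq_some (hrem : rem ⊆ I.projs)
    (h : I.greedyStep μ rem β = some a) :
    I.uw μ (I.greedyFrom μ rem β) = I.projVal μ a * I.cost a +
      I.uw μ (I.greedyFrom μ (rem.erase a) (β - I.cost a)) := by
  rw [greedyFrom_of_greedyStep_eq_some h]
  exact uw_insert (hrem (mem_of_greedyStep_eq_some h))
    fun ha ↦ notMem_erase a rem (greedyFrom_subset I μ _ _ ha)

theorem sub_mul_uw_le_mul_uw_greedyFrom (hμ : IsSat μ) (hrem : rem ⊆ I.projs)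
    (hM : ∀ p ∈ rem, I.cost p ≤ M) (hT : T ⊆ rem) (hTt : I.costOf T ≤ t) (hβt : β - M ≤ t) :
    (β - M) * I.uw μ T ≤ t * I.uw μ (I.greedyFrom μ rem β) := by
  induction rem using Finset.strongInduction generalizing β T t with
  | H rem ih =>
    have hTprojs : T ⊆ I.projs := hT.trans hrem
    rcases le_or_gt β M with hβM | hMβ
    · have hG : 0 ≤ I.uw μ (I.greedyFrom μ rem β) :=
        uw_nonneg hμ ((greedyFrom_subset I μ rem β).trans hrem)
      exact (mul_nonpos_of_nonpos_of_nonneg (sub_nonpos.2 hβM) (uw_nonneg hμ hTprojs)).trans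
        (mul_nonneg ((costOf_nonneg hTprojs).trans hTt) hG)
    have hafford : ∀ p ∈ rem, I.cost p ≤ β := fun p hp ↦ (hM p hp).trans hMβ.le
    cases h : I.greedyStep μ rem β with
    | none =>
      have hTempty : T = ∅ := eq_empty_of_forall_notMem fun p hp ↦
        (lt_cost_of_greedyStep_eq_none h (hT hp)).not_ge (hafford p (hT hp))
      simp [hTempty, greedyFrom_of_greedyStep_eq_none h, uw]
    | some a =>
      have ha : a ∈ rem := mem_of_greedyStep_eq_some h
      have hmax : ∀ p ∈ T, I.projVal μ p ≤ I.projVal μ a := fun p hp ↦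
        projVal_le_of_greedyStep_eq_some h (hT hp) (hafford p (hT hp))
      have hrem' : rem.erase a ⊆ I.projs := (erase_subset a rem).trans hrem
      have hM' : ∀ p ∈ rem.erase a, I.cost p ≤ M := fun p hp ↦ hM p (mem_of_mem_erase hp)
      have hcost : 0 < I.cost a := I.cost_pos a (hrem ha)
      rw [uw_greedyFrom_of_greedyStep_eq_some hrem h]
      by_cases haT : a ∈ T
      · refine mul_uw_le_mul_add_of_mem hμ hTprojs haT hmax hTt hβt
          (uw_nonneg hμ ((greedyFrom_subset I μ _ _).trans hrem')) ?_
        rw [sub_right_comm]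
        exact ih _ (erase_ssubset ha) hrem' hM' (erase_subset_erase a hT)
          (costOf_erase_le_sub haT hTt) (by linarith)
      · refine mul_uw_le_mul_add_of_projVal_le hμ hTprojs (hrem ha) hmax hTt ?_
        rw [sub_right_comm]
        exact ih _ (erase_ssubset ha) hrem' hM' (subset_erase.2 ⟨hT, haT⟩) hTt (by linarith)

end PB

/-- Greedy has utilitarian guarantee `(b - c_max)/b` for any satisfaction
function. -/
theorem greedy_guarantee {π ν : Type} [LinearOrder π] (I : PB π ν)
    (μ : ℝ → ℝ) (hμ : IsSat μ) :
    ∀ Pstar : Finset π, I.feasibleSet Pstar →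
      I.uw μ (I.greedy μ) ≥ ((I.budget - I.cmax) / I.budget) * I.uw μ Pstar := by
  intro Pstar ⟨hsub, hcost⟩
  have hbound : (I.budget - I.cmax) * I.uw μ Pstar ≤ I.budget * I.uw μ (I.greedy μ) :=
    PB.sub_mul_uw_le_mul_uw_greedyFrom hμ Subset.rfl (fun _ ↦ PB.cost_le_cmax) hsub hcost
      (sub_le_self _ I.cmax_pos.le)
  rwa [ge_iff_le, div_mul_eq_mul_div, div_le_iff₀' I.budget_pos]
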